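/- Let K_S(x, y) = (sin(π(x_1−y_1))/(π(x_1−y_1)))·(sin(π(x_2−y_2))/(π(x_2−y_2))) for x, y ∈ ℝ² (with sin(πt)/(πt) = 1 at t = 0), and for n ∈ ℤ² let S_n = S_0 × (n + S_0) with S_0 = [−1/2, 1/2)². Define a_0 = 1 − ∫_{S_0×S_0} |K_S(x,y)|² dx dy, a_n = −∫_{S_n} |K_S(x,y)|² dx dy for n ≠ 0, and ω(θ_1, θ_2) = ∑_{n∈ℤ²} a_n e^{2πi(n_1θ_1 + n_2θ_2)}. Then there exists c > 0 such that ω(θ_1, 0) ≥ c|θ_1| and ω(0, θ_2) ≥ c|θ_2| for all θ_1, θ_2 ∈ (−1/2, 1/2). -/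

import Mathlib

open MeasureTheory Complex Real ENNReal

/-!
The squared kernel is a tensor product, so the cell integral factors: with
`cellMass m = ∫∫ sinc²(π (x - z - m)) dz dx` over the unit square centred at the origin,
`∫_{S_n} K² = cellMass n₁ * cellMass n₂` (`integral_cell_eq`).

Parseval's identity for `t ↦ exp (2πiut)` on `[-1/2, 1/2]` gives `∑ₙ sinc²(π (u - n)) = 1` for
every real `u` (`hasSum_sinc_sq`), and integrating yields `∑ₘ cellMass m = 1` (`hasSum_cellMass`).
On an axis the double series therefore collapses to
`ω(θ, 0) = 1 - ∑ₘ cellMass m * cos (2πmθ) = ∑ₘ cellMass m * (1 - cos (2πmθ))` (`re_tsum_axis`),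
a series with nonnegative terms.

For `m ≥ 1` one has `cellMass m ≥ 1 / (8π²m²)` (`cellMass_lower`), because `sin²` is `1`-periodic
in the relevant variable with mean `1/2` while `|x - z - m| ≤ 2m`. For `1 ≤ m ≤ 1 / (2|θ|)` also
`1 - cos (2πmθ) ≥ 8m²θ²`. Hence each of these roughly `1 / |θ|` terms is at least `θ² / π²`, and
their sum is at least `|θ| / (4π²)` (`sum_cellMass_lower`). The second axis follows by transposing
the lattice.
-/

/-- The Fourier transform of the indicator of `[-1/2, 1/2]`. -/
lemma integral_exp_unit (y : ℝ) :
    ∫ x in (-(1/2) : ℝ)..(1/2), Complex.exp (2 * y * Complex.I * x) = (Real.sinc y : ℂ) := by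
  rcases eq_or_ne y 0 with rfl | hy
  · norm_num
  have hy' : (y : ℂ) ≠ 0 := by exact_mod_cast hy
  rw [integral_exp_mul_complex (by simp [hy]), Real.sinc_of_ne_zero hy]
  have h1 : 2 * (y : ℂ) * Complex.I * ((1 / 2 : ℝ) : ℂ) = y * Complex.I := by
    push_cast; ring
  have h2 : 2 * (y : ℂ) * Complex.I * ((-(1 / 2) : ℝ) : ℂ) = -y * Complex.I := by
    push_cast; ring
  rw [h1, h2]
  push_cast
  rw [Complex.sin]
  field_simp
  rw [Complex.I_sq]
  ring

/-- `sinc (π (u - n))` is the `n`-th Fourier coefficient of `exp (2πiux)` on `[-1/2, 1/2]`, a function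
of modulus one, so Parseval's identity gives the sum of the squares. -/
lemma hasSum_sinc_sq (u : ℝ) : HasSum (fun n : ℤ => Real.sinc (π * (u - n)) ^ 2) 1 := by
  have hab : (-(1/2) : ℝ) < 1/2 := by norm_num
  set f : ℝ → ℂ := fun x => Complex.exp (2 * (π * u : ℝ) * Complex.I * x) with hf
  have hnorm : ∀ x, ‖f x‖ = 1 := fun x => by
    have : (2 * ((π * u : ℝ) : ℂ) * Complex.I * x) = ((2 * (π * u) * x : ℝ) : ℂ) * Complex.I := by
      push_cast; ring
    rw [hf]
    simp only [this, Complex.norm_exp_ofReal_mul_I]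
  have hL2 : MemLp f 2 (volume.restrict (Set.Ioc (-(1/2) : ℝ) (1/2))) := by
    refine MemLp.of_bound (C := 1) ?_ (Filter.Eventually.of_forall fun x => (hnorm x).le)
    exact (by fun_prop : Continuous f).aestronglyMeasurable
  have h := hasSum_sq_fourierCoeffOn hab hL2
  convert h using 1
  · ext n
    rw [fourierCoeffOn_eq_integral]
    have : ∀ x : ℝ, fourier (-n) (x : AddCircle ((1/2 : ℝ) - -(1/2))) • f x
        = Complex.exp (2 * (π * (u - n) : ℝ) * Complex.I * x) := fun x => by
      rw [fourier_coe_apply, smul_eq_mul, hf, ← Complex.exp_add]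
      congr 1
      push_cast
      ring
    simp only [this]
    rw [integral_exp_unit]
    norm_num
  · simp only [hnorm]
    norm_num

/-- The integral of the squared one-dimensional sine kernel over `[-1/2, 1/2) × (m + [-1/2, 1/2))`,
with the second variable translated back to `[-1/2, 1/2)`. -/
noncomputable def cellMass (m : ℤ) : ℝ :=
  ∫ x in Set.Ico (-(1/2) : ℝ) (1/2), ∫ z in Set.Ico (-(1/2) : ℝ) (1/2),
    Real.sinc (π * (x - z - m)) ^ 2

lemma sinc_sq_le_one (x : ℝ) : Real.sinc x ^ 2 ≤ 1 :=
  (sq_le_one_iff_abs_le_one _).2 (Real.abs_sinc_le_one x)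

lemma cellMass_nonneg (m : ℤ) : 0 ≤ cellMass m :=
  integral_nonneg fun _ => integral_nonneg fun _ => sq_nonneg _

/-- Termwise integration, over the unit cell, of a series of nonnegative functions with sum `1`. -/
lemma hasSum_integral_cell {F : ℤ → ℝ → ℝ} (hm : ∀ n, StronglyMeasurable (F n))
    (h0 : ∀ n x, 0 ≤ F n x) (h1 : ∀ x, HasSum (fun n => F n x) 1) :
    HasSum (fun n => ∫ x in Set.Ico (-(1/2) : ℝ) (1/2), F n x) 1 := by
  have := hasSum_integral_of_dominated_convergence
    (μ := volume.restrict (Set.Ico (-(1/2) : ℝ) (1/2))) (F := F) (f := fun _ => 1) F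
    (fun n => (hm n).aestronglyMeasurable)
    (fun n => .of_forall fun x => by rw [Real.norm_of_nonneg (h0 n x)])
    (.of_forall fun x => (h1 x).summable)
    (by simp only [(h1 _).tsum_eq]; exact integrable_const _)
    (.of_forall h1)
  have h : ∫ _ in Set.Ico (-(1/2) : ℝ) (1/2), (1 : ℝ) = 1 := by
    rw [setIntegral_const]; norm_num
  rwa [h] at this

lemma hasSum_cellMass : HasSum cellMass 1 := by
  refine hasSum_integral_cell (fun n => ?_) (fun n x => integral_nonneg fun _ => sq_nonneg _)
    fun x => hasSum_integral_cell (fun n => ?_) (fun n z => sq_nonneg _)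
      fun z => hasSum_sinc_sq (x - z)
  · have : Continuous (Function.uncurry fun (x z : ℝ) => Real.sinc (π * (x - z - n)) ^ 2) := by
      have := Real.continuous_sinc
      unfold Function.uncurry
      fun_prop
    exact this.stronglyMeasurable.integral_prod_right
  · have := Real.continuous_sinc
    exact Continuous.stronglyMeasurable (by fun_prop)

lemma integral_sin_sq_cell (x : ℝ) :
    ∫ z in Set.Ico (-(1/2) : ℝ) (1/2), Real.sin (π * (x - z)) ^ 2 = 1 / 2 := by
  rw [integral_Ico_eq_integral_Ioc, ← intervalIntegral.integral_of_le (by norm_num)]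
  simp only [mul_sub π]
  rw [intervalIntegral.integral_comp_sub_mul (fun t => Real.sin t ^ 2) Real.pi_ne_zero, integral_sin_sq]
  have h1 : π * x - π * (1/2) = π * x - π / 2 := by ring
  have h2 : π * x - π * (-(1/2)) = π * x + π / 2 := by ring
  rw [h1, h2, Real.sin_sub_pi_div_two, Real.cos_sub_pi_div_two, Real.sin_add_pi_div_two,
    Real.cos_add_pi_div_two, smul_eq_mul]
  field_simp
  ring

lemma sinc_sq_lower {m : ℤ} (hm : 1 ≤ m) {x z : ℝ} (hx : x ∈ Set.Ico (-(1/2) : ℝ) (1/2))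
    (hz : z ∈ Set.Ico (-(1/2) : ℝ) (1/2)) :
    1 / (4 * π ^ 2 * m ^ 2) * Real.sin (π * (x - z)) ^ 2 ≤ Real.sinc (π * (x - z - m)) ^ 2 := by
  have hm' : (1 : ℝ) ≤ m := by exact_mod_cast hm
  obtain ⟨hx1, hx2⟩ := hx
  obtain ⟨hz1, hz2⟩ := hz
  have hneg : x - z - m < 0 := by linarith
  have hne : π * (x - z - m) ≠ 0 := mul_ne_zero Real.pi_ne_zero hneg.ne
  have hs : Real.sin (π * (x - z - m)) ^ 2 = Real.sin (π * (x - z)) ^ 2 := by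
    have : π * (x - z - m) = π * (x - z) - m * π := by ring
    rw [this, Real.sin_sub_int_mul_pi, mul_pow]
    rcases Int.even_or_odd m with h | h <;> simp [h.neg_one_zpow]
  rw [Real.sinc_of_ne_zero hne, div_pow, hs, div_eq_mul_one_div (Real.sin (π * (x - z)) ^ 2),
    mul_comm (Real.sin (π * (x - z)) ^ 2)]
  refine mul_le_mul_of_nonneg_right ?_ (sq_nonneg _)
  refine one_div_le_one_div_of_le (by positivity) ?_
  have : (x - z - m) ^ 2 ≤ (2 * m) ^ 2 := sq_le_sq' (by linarith) (by linarith)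
  have := mul_le_mul_of_nonneg_left this (sq_nonneg π)
  linarith

lemma cellMass_lower {m : ℤ} (hm : 1 ≤ m) : 1 / (8 * π ^ 2 * m ^ 2) ≤ cellMass m := by
  have hS : MeasurableSet (Set.Ico (-(1/2) : ℝ) (1/2)) := measurableSet_Ico
  have hc := Real.continuous_sinc
  have hmeas : Continuous (Function.uncurry fun (x z : ℝ) => Real.sinc (π * (x - z - m)) ^ 2) := by
    unfold Function.uncurry
    fun_prop
  have hinner (x : ℝ) (hx : x ∈ Set.Ico (-(1/2) : ℝ) (1/2)) : 1 / (8 * π ^ 2 * m ^ 2) ≤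
      ∫ z in Set.Ico (-(1/2) : ℝ) (1/2), Real.sinc (π * (x - z - m)) ^ 2 := by
    have h : ∫ z in Set.Ico (-(1/2) : ℝ) (1/2),
        1 / (4 * π ^ 2 * m ^ 2) * Real.sin (π * (x - z)) ^ 2 = 1 / (8 * π ^ 2 * m ^ 2) := by
      rw [integral_const_mul, integral_sin_sq_cell]
      field_simp
      norm_num
    rw [← h]
    refine setIntegral_mono_on ?_ ?_ hS fun z hz => sinc_sq_lower hm hx hz
    · have : Continuous fun z : ℝ => 1 / (4 * π ^ 2 * m ^ 2) * Real.sin (π * (x - z)) ^ 2 := by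
        fun_prop
      exact this.integrableOn_Icc.mono_set Set.Ico_subset_Icc_self
    · have : Continuous fun z : ℝ => Real.sinc (π * (x - z - m)) ^ 2 := by fun_prop
      exact this.integrableOn_Icc.mono_set Set.Ico_subset_Icc_self
  have hconst : ∫ _ in Set.Ico (-(1/2) : ℝ) (1/2), 1 / (8 * π ^ 2 * (m : ℝ) ^ 2)
      = 1 / (8 * π ^ 2 * m ^ 2) := by
    rw [setIntegral_const]; norm_num
  rw [← hconst]
  refine setIntegral_mono_on (integrable_const _) ?_ hS hinner
  refine Integrable.of_bound (C := 1)
    hmeas.stronglyMeasurable.integral_prod_right.aestronglyMeasurable (.of_forall fun x => ?_)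
  refine (norm_setIntegral_le_of_norm_le_const (C := 1) (by simp) fun z _ => ?_).trans ?_
  · rw [Real.norm_of_nonneg (sq_nonneg _)]
    exact sinc_sq_le_one _
  · norm_num

lemma sum_cellMass_lower {θ : ℝ} (h0 : 0 < |θ|) (hθ : |θ| < 1 / 2) :
    |θ| / (4 * π ^ 2) ≤ ∑' n : ℤ, cellMass n * (1 - Real.cos (2 * π * (n * θ))) := by
  have hnn (n : ℤ) : 0 ≤ cellMass n * (1 - Real.cos (2 * π * (n * θ))) :=
    mul_nonneg (cellMass_nonneg n) (sub_nonneg.2 (Real.cos_le_one _))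
  have hsum : Summable fun n : ℤ => cellMass n * (1 - Real.cos (2 * π * (n * θ))) := by
    refine Summable.of_nonneg_of_le hnn (fun n => ?_) (hasSum_cellMass.summable.mul_right 2)
    exact mul_le_mul_of_nonneg_left (by linarith [Real.neg_one_le_cos (2 * π * (n * θ))])
      (cellMass_nonneg n)
  set N : ℤ := ⌊1 / (2 * |θ|)⌋ with hN
  have hlow : ∀ n ∈ Finset.Icc 1 N, θ ^ 2 / π ^ 2 ≤
      cellMass n * (1 - Real.cos (2 * π * (n * θ))) := fun n hn => by
    obtain ⟨hn1, hn2⟩ := Finset.mem_Icc.1 hn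
    have hn1' : (1 : ℝ) ≤ n := by exact_mod_cast hn1
    have hn2' : (n : ℝ) * (2 * |θ|) ≤ 1 := (le_div_iff₀ (by positivity)).1 (Int.le_floor.1 hn2)
    -- `n ≤ 1 / (2|θ|)` keeps `2πnθ` within `[-π, π]`
    have hcos := Real.cos_le_one_sub_mul_cos_sq (x := 2 * π * (n * θ)) (by
      rw [abs_mul (2 * π), abs_mul (n : ℝ), abs_of_pos (by positivity : 0 < 2 * π),
        abs_of_pos (by linarith : (0 : ℝ) < n)]
      nlinarith [Real.pi_pos])
    have h8 : 8 * n ^ 2 * θ ^ 2 ≤ 1 - Real.cos (2 * π * (n * θ)) := by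
      have : 2 / π ^ 2 * (2 * π * (n * θ)) ^ 2 = 8 * n ^ 2 * θ ^ 2 := by
        field_simp; ring
      linarith
    calc θ ^ 2 / π ^ 2 = 1 / (8 * π ^ 2 * n ^ 2) * (8 * n ^ 2 * θ ^ 2) := by field_simp
      _ ≤ _ := mul_le_mul (cellMass_lower hn1) h8 (by positivity) (cellMass_nonneg n)
  refine le_trans ?_ (hsum.sum_le_tsum (Finset.Icc 1 N) fun n _ => hnn n)
  refine le_trans ?_ (Finset.card_nsmul_le_sum _ _ _ hlow)
  have hx : 1 ≤ 1 / (2 * |θ|) := by rw [le_div_iff₀ (by positivity)]; linarith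
  have hN1 : 1 ≤ N := Int.le_floor.2 (by simpa using hx)
  -- `⌊t⌋ ≥ t / 2` for `t ≥ 1`
  have hN2 : 1 / (4 * |θ|) ≤ N := by
    have h1 : 1 / (2 * |θ|) < N + 1 := Int.lt_floor_add_one _
    have h2 : (1 : ℝ) ≤ N := by exact_mod_cast hN1
    have h3 : 1 / (4 * |θ|) = 1 / (2 * |θ|) / 2 := by field_simp; norm_num
    linarith
  have hcard : ((Finset.Icc 1 N).card : ℝ) = N := by
    rw [Int.card_Icc, add_sub_cancel_right]
    exact_mod_cast Int.toNat_of_nonneg (by omega)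
  rw [nsmul_eq_mul, hcard]
  calc |θ| / (4 * π ^ 2) = 1 / (4 * |θ|) * (θ ^ 2 / π ^ 2) := by
        rw [← sq_abs θ]; field_simp
    _ ≤ _ := mul_le_mul_of_nonneg_right hN2 (by positivity)

lemma hasSum_mul_prod {f g : ℤ → ℂ} {A B : ℂ} (hf : HasSum f A) (hg : HasSum g B)
    (hf' : Summable fun n => ‖f n‖) (hg' : Summable fun n => ‖g n‖) :
    HasSum (fun n : ℤ × ℤ => f n.1 * g n.2) (A * B) :=
  hf.mul hg (summable_mul_of_summable_norm hf' hg')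

/-- The double series splits as the Kronecker delta at `0` minus a product of two single series, the
second of which has sum `1`. Only `e 0 = 1` and `|e n| = 1` are needed of the character `e`. -/
lemma re_tsum_of_character (a : ℤ × ℤ → ℝ)
    (ha0 : a 0 = 1 - cellMass 0 * cellMass 0)
    (han : ∀ n : ℤ × ℤ, n ≠ 0 → a n = -(cellMass n.1 * cellMass n.2)) (e : ℤ → ℂ)
    (he0 : e 0 = 1) (hnorm : ∀ n, ‖e n‖ = 1) :
    (∑' n : ℤ × ℤ, (a n : ℂ) * e n.1).re = ∑' n : ℤ, cellMass n * (1 - (e n).re) := by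
  have hG : Summable fun n => ‖(cellMass n : ℂ) * e n‖ := by
    simp only [norm_mul, hnorm, mul_one, Complex.norm_real]
    exact hasSum_cellMass.summable.abs
  have h1 : HasSum (fun n => (cellMass n : ℂ)) 1 := by
    have := Complex.hasSum_ofReal.2 hasSum_cellMass
    rwa [Complex.ofReal_one] at this
  have h1n : Summable fun n => ‖(cellMass n : ℂ)‖ := by
    simp only [Complex.norm_real]
    exact hasSum_cellMass.summable.abs
  obtain ⟨G, hGs⟩ : ∃ G, HasSum (fun n => (cellMass n : ℂ) * e n) G := hG.of_norm
  have hprod := hasSum_mul_prod hGs h1 hG h1n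
  have hδ : HasSum (fun n : ℤ × ℤ => if n = 0 then (1 : ℂ) else 0) 1 :=
    hasSum_ite_eq (0 : ℤ × ℤ) (1 : ℂ)
  have hω : HasSum (fun n : ℤ × ℤ => (a n : ℂ) * e n.1)
      (1 - G * 1) := by
    have hfun : (fun n : ℤ × ℤ => (a n : ℂ) * e n.1) = fun n : ℤ × ℤ =>
        (if n = 0 then (1 : ℂ) else 0) - (cellMass n.1 : ℂ) * e n.1 * (cellMass n.2 : ℂ) := by
      funext n
      rcases eq_or_ne n 0 with rfl | hn
      · simp [ha0, he0]
      · rw [han n hn, if_neg hn]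
        push_cast
        ring
    rw [hfun]
    exact hδ.sub hprod
  rw [hω.tsum_eq, mul_one, Complex.sub_re, Complex.one_re]
  have hre := Complex.hasSum_re hGs
  rw [← (hasSum_cellMass.sub hre).tsum_eq]
  refine tsum_congr fun n => ?_
  rw [Complex.re_ofReal_mul]
  ring

lemma re_tsum_axis (a : ℤ × ℤ → ℝ)
    (ha0 : a 0 = 1 - cellMass 0 * cellMass 0)
    (han : ∀ n : ℤ × ℤ, n ≠ 0 → a n = -(cellMass n.1 * cellMass n.2)) (θ : ℝ) :
    (∑' n : ℤ × ℤ, (a n : ℂ) * Complex.exp (2 * π * Complex.I * (n.1 * θ))).re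
      = ∑' n : ℤ, cellMass n * (1 - Real.cos (2 * π * (n * θ))) := by
  have he (n : ℤ) : Complex.exp (2 * π * Complex.I * (n * θ))
      = Complex.exp ((2 * π * (n * θ) : ℝ) * Complex.I) := by
    congr 1; push_cast; ring
  simp only [he]
  rw [re_tsum_of_character a ha0 han
    (fun n => Complex.exp ((2 * π * (n * θ) : ℝ) * Complex.I)) (by simp)
    (fun n => Complex.norm_exp_ofReal_mul_I _)]
  simp only [Complex.exp_ofReal_mul_I_re]

lemma axis_bound (a : ℤ × ℤ → ℝ)
    (ha0 : a 0 = 1 - cellMass 0 * cellMass 0)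
    (han : ∀ n : ℤ × ℤ, n ≠ 0 → a n = -(cellMass n.1 * cellMass n.2))
    {θ : ℝ} (hθ : θ ∈ Set.Ioo (-(1/2) : ℝ) (1/2)) :
    1 / (4 * π ^ 2) * |θ| ≤
      (∑' n : ℤ × ℤ, (a n : ℂ) * Complex.exp (2 * π * Complex.I * (n.1 * θ))).re := by
  rw [re_tsum_axis a ha0 han]
  rcases (abs_nonneg θ).eq_or_lt with h | h
  · rw [← h, mul_zero]
    exact tsum_nonneg fun n =>
      mul_nonneg (cellMass_nonneg n) (sub_nonneg.2 (Real.cos_le_one _))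
  · have := sum_cellMass_lower h (abs_lt.2 hθ)
    rwa [one_div_mul_eq_div]

/-- Factorisation of the cell integral for a translation-invariant tensor-product integrand. No
integrability is needed, since Fubini for products holds with the junk value `0` as well. -/
lemma integral_cell_eq (n : ℤ × ℤ) (q : ℝ → ℝ) :
    (∫ x in Set.Ico (-(1/2) : ℝ) (1/2) ×ˢ Set.Ico (-(1/2) : ℝ) (1/2),
      ∫ y in (fun z : ℝ × ℝ => ((n.1 : ℝ) + z.1, (n.2 : ℝ) + z.2)) ''
        (Set.Ico (-(1/2) : ℝ) (1/2) ×ˢ Set.Ico (-(1/2) : ℝ) (1/2)),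
        q (x.1 - y.1) * q (x.2 - y.2)) =
    (∫ x in Set.Ico (-(1/2) : ℝ) (1/2), ∫ z in Set.Ico (-(1/2) : ℝ) (1/2), q (x - z - n.1)) *
    (∫ x in Set.Ico (-(1/2) : ℝ) (1/2), ∫ z in Set.Ico (-(1/2) : ℝ) (1/2), q (x - z - n.2)) := by
  have hmp : MeasurePreserving (fun z : ℝ × ℝ => ((n.1 : ℝ) + z.1, (n.2 : ℝ) + z.2)) :=
    measurePreserving_add_left volume ((n.1 : ℝ), (n.2 : ℝ))
  have hemb : MeasurableEmbedding (fun z : ℝ × ℝ => ((n.1 : ℝ) + z.1, (n.2 : ℝ) + z.2)) :=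
    measurableEmbedding_addLeft ((n.1 : ℝ), (n.2 : ℝ))
  have hin (x : ℝ × ℝ) := (hmp.setIntegral_image_emb hemb (fun y => q (x.1 - y.1) * q (x.2 - y.2))
    (Set.Ico (-(1/2) : ℝ) (1/2) ×ˢ Set.Ico (-(1/2) : ℝ) (1/2))).trans
    (setIntegral_prod_mul (μ := volume) (ν := volume) (fun z => q (x.1 - (n.1 + z)))
      (fun z => q (x.2 - (n.2 + z))) _ _)
  simp only [hin, sub_sub, add_comm _ (n.1 : ℝ), add_comm _ (n.2 : ℝ)]
  exact setIntegral_prod_mul (μ := volume) (ν := volume)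
    (fun x => ∫ z in Set.Ico (-(1/2) : ℝ) (1/2), q (x - (n.1 + z)))
    (fun x => ∫ z in Set.Ico (-(1/2) : ℝ) (1/2), q (x - (n.2 + z))) _ _

/-- The spectral density `ω` of the determinantal point process with kernel the tensor square
of the Dyson sine kernel satisfies `ω(θ₁,0) ≥ c|θ₁|` and `ω(0,θ₂) ≥ c|θ₂|` for some `c > 0`
and all `θ₁, θ₂ ∈ (−1/2,1/2)`. -/
theorem sine_tensor_spectral_density_axis_lower_bound
    (K : ℝ × ℝ → ℝ × ℝ → ℝ)
    (hK : ∀ x y : ℝ × ℝ, K x y =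
      (if x.1 - y.1 = 0 then 1 else Real.sin (Real.pi * (x.1 - y.1)) / (Real.pi * (x.1 - y.1))) *
      (if x.2 - y.2 = 0 then 1 else Real.sin (Real.pi * (x.2 - y.2)) / (Real.pi * (x.2 - y.2))))
    (S₀ : Set (ℝ × ℝ)) (hS₀ : S₀ = Set.Ico (-(1/2) : ℝ) (1/2) ×ˢ Set.Ico (-(1/2) : ℝ) (1/2))
    (I : ℤ × ℤ → ℝ)
    (hI : ∀ n : ℤ × ℤ, I n =
      ∫ x in S₀, ∫ y in (fun z : ℝ × ℝ => ((n.1 : ℝ) + z.1, (n.2 : ℝ) + z.2)) '' S₀, (K x y) ^ 2)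
    (a : ℤ × ℤ → ℝ) (ha0 : a 0 = 1 - I 0) (han : ∀ n : ℤ × ℤ, n ≠ 0 → a n = -(I n))
    (ω : ℝ → ℝ → ℝ)
    (hω : ∀ θ₁ θ₂ : ℝ, ω θ₁ θ₂ = (∑' n : ℤ × ℤ,
      (a n : ℂ) * Complex.exp (2 * Real.pi * Complex.I * ((n.1 : ℂ) * θ₁ + (n.2 : ℂ) * θ₂))).re) :
    ∃ c : ℝ, 0 < c ∧ ∀ θ₁ ∈ Set.Ioo (-(1/2) : ℝ) (1/2), ∀ θ₂ ∈ Set.Ioo (-(1/2) : ℝ) (1/2),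
      c * |θ₁| ≤ ω θ₁ 0 ∧ c * |θ₂| ≤ ω 0 θ₂ := by
  have hq (t : ℝ) : (if t = 0 then 1 else Real.sin (π * t) / (π * t)) = Real.sinc (π * t) := by
    simp [Real.sinc, Real.pi_ne_zero]
  have hI' (n : ℤ × ℤ) : I n = cellMass n.1 * cellMass n.2 := by
    rw [hI, hS₀]
    simp only [hK, hq, mul_pow]
    exact integral_cell_eq n fun t => Real.sinc (π * t) ^ 2
  simp only [hI'] at ha0 han
  refine ⟨1 / (4 * π ^ 2), by positivity, fun θ₁ h₁ θ₂ h₂ => ⟨?_, ?_⟩⟩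
  · rw [hω]
    simpa using axis_bound a ha0 han h₁
  · -- transpose the lattice to reduce to the first axis
    have h := axis_bound (fun n => a n.swap) (by simpa using ha0)
      (fun n hn => by
        rw [han n.swap (fun h => hn (by simpa using congrArg Prod.swap h))]
        simp [mul_comm]) h₂
    rw [← (Equiv.prodComm ℤ ℤ).tsum_eq] at h
    rw [hω]
    simpa using h
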